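/- There is an absolute constant A > 0 such that the following holds. Let X and Y be independent real random variables with bounded ranges, let κ ≥ 2, and let f, g be weakly κ-bi-Lipschitz real-valued functions defined on the essential ranges of X and Y respectively. Let (X₁, Y₁) and (X₂, Y₂) be independent copies of (X, Y) (so X₁, Y₁, X₂, Y₂ are independent). Then for all n ∈ ℕ: (a) Hₙ(f(X₁) + f(X₂) + g(Y₁) + g(Y₂)) ≤ 3·Hₙ(f(X) + g(Y)) − Hₙ(X) − Hₙ(Y) + A·log κ; (b) Hₙ(f(X₁) − f(X₂) + g(Y₁) − g(Y₂)) ≤ 7·Hₙ(f(X) + g(Y)) − 3·Hₙ(X) − 3·Hₙ(Y) + A·log κ; (c) Hₙ(f(X₁) + f(X₂) − g(Y₁) − g(Y₂)) ≤ 9·Hₙ(f(X) + g(Y)) − 4·Hₙ(X) − 4·Hₙ(Y) + A·log κ. -/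

import Mathlib

open MeasureTheory ProbabilityTheory Real

/-- The dyadic discretization map `D_n(x) = 2^{-n} ⌊2^n x⌋`. -/
noncomputable def Dn (n : ℕ) (x : ℝ) : ℝ := (⌊(2 : ℝ) ^ n * x⌋ : ℝ) / (2 : ℝ) ^ n

/-- Shannon entropy (base 2) of the discrete random variable `f` under `P`. -/
noncomputable def entOf {Ω : Type*} [MeasurableSpace Ω] {S : Type*}
    (P : Measure Ω) (f : Ω → S) : ℝ :=
  ∑' s : S, -((P (f ⁻¹' {s})).toReal * Real.logb 2 (P (f ⁻¹' {s})).toReal)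

/-- `H_n(X)`: entropy of `D_n(X)`. -/
noncomputable def Hn {Ω : Type*} [MeasurableSpace Ω] (P : Measure Ω) (n : ℕ) (X : Ω → ℝ) : ℝ :=
  entOf P (fun ω => Dn n (X ω))

/-- `f` is weakly κ-bi-Lipschitz on `D` with at most `L` pieces: `f` is κ-Lipschitz on `D`,
and `D` decomposes into at most `L` pieces on each of which `f` has a κ-Lipschitz inverse. -/
def WeaklyBiLipschitzOn (f : ℝ → ℝ) (D : Set ℝ) (κ : ℝ) (L : ℕ) : Prop :=
  (∀ x ∈ D, ∀ y ∈ D, |f x - f y| ≤ κ * |x - y|) ∧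
    ∃ R : Fin L → Set ℝ, D ⊆ (⋃ i, R i) ∧
      ∀ i : Fin L, ∀ x ∈ D ∩ R i, ∀ y ∈ D ∩ R i, |x - y| ≤ κ * |f x - f y|

/-!
Discretise: with `U = ⌊2ⁿ f(X)⌋` and `V = ⌊2ⁿ g(Y)⌋`, rounding changes the entropies of all sums by
`O(1)`. Since `f` contracts distances by at most the factor `κ` on each of boundedly many pieces,
`U` determines `⌊2ⁿ X⌋` up to `O(κ)` values, so that `Hₙ(X) ≤ H(U) + O(log κ)`; likewise for `V`.

For discrete variables the three bounds follow from submodularity of entropy. It gives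
`H(A + B + C) + H(B) ≤ H(A + B) + H(B + C)` for independent `A, B, C`, which used twice proves (a).
Applied to two copies of `(A, B)` that are conditionally independent given `A + B`, together with a
third, independent copy, it gives `H(A - B) ≤ 3 H(A + B) - H(A) - H(B)` for independent `A, B`.
By (a), taking `A = U₁ + V₁`, `B = U₂ + V₂` proves (b) and `A = U₁ + U₂`, `B = V₁ + V₂` proves (c).
-/

/-- A random variable that almost surely takes one of finitely many values. All entropies of such
variables are finite sums, so the junk value of a divergent `tsum` in `entOf` never occurs. -/
structure FinitelyValued {Ω S : Type*} [MeasurableSpace Ω] [MeasurableSpace S] (F : Ω → S)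
    (P : Measure Ω) : Prop where
  measurable : Measurable F
  exists_finset : ∃ s : Finset S, ∀ᵐ ω ∂P, F ω ∈ s

/-- The surprisal (information content) of the value taken by `F`; its mean is the entropy. -/
noncomputable def surprisal {Ω S : Type*} [MeasurableSpace Ω] (P : Measure Ω) (F : Ω → S)
    (ω : Ω) : ℝ :=
  -logb 2 (P.real (F ⁻¹' {F ω}))

namespace FinitelyValued

variable {Ω Ω' S T : Type*} [MeasurableSpace Ω] [MeasurableSpace Ω'] [MeasurableSpace S]
  [MeasurableSpace T] {P : Measure Ω} {P' : Measure Ω'} {F : Ω → S} {G : Ω → T}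

lemma comp [DiscreteMeasurableSpace S] (hF : FinitelyValued F P) (φ : S → T) :
    FinitelyValued (fun ω => φ (F ω)) P where
  measurable := (Measurable.of_discrete (f := φ)).comp hF.measurable
  exists_finset := by
    classical
    obtain ⟨s, hs⟩ := hF.exists_finset
    exact ⟨s.image φ, hs.mono fun ω h => Finset.mem_image_of_mem φ h⟩

lemma prodMk (hF : FinitelyValued F P) (hG : FinitelyValued G P) :
    FinitelyValued (fun ω => (F ω, G ω)) P where
  measurable := hF.measurable.prodMk hG.measurable
  exists_finset := by
    obtain ⟨s, hs⟩ := hF.exists_finset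
    obtain ⟨t, ht⟩ := hG.exists_finset
    exact ⟨s ×ˢ t, by filter_upwards [hs, ht] with ω h h' using Finset.mk_mem_product h h'⟩

lemma comp_measurePreserving {τ : Ω' → Ω} (hF : FinitelyValued F P)
    (hτ : MeasurePreserving τ P' P) : FinitelyValued (fun ω => F (τ ω)) P' where
  measurable := hF.measurable.comp hτ.measurable
  exists_finset := hF.exists_finset.imp fun _ hs => hτ.quasiMeasurePreserving.ae hs

lemma of_identDistrib [DiscreteMeasurableSpace S] {F' : Ω' → S} (hF : FinitelyValued F P)
    (hF' : Measurable F') (h : IdentDistrib F F' P P') : FinitelyValued F' P' where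
  measurable := hF'
  exists_finset := hF.exists_finset.imp fun s hs => h.ae_mem_snd (t := s) .of_discrete hs

end FinitelyValued

section Entropy

section Fibres

variable {Ω Ω' S T U : Type*} [MeasurableSpace Ω] [MeasurableSpace Ω'] {P : Measure Ω}
  {P' : Measure Ω'} {F : Ω → S}

lemma ae_measure_fiber_ne_zero [Countable S] (P : Measure Ω) (F : Ω → S) :
    ∀ᵐ ω ∂P, P (F ⁻¹' {F ω}) ≠ 0 := by
  have havoid : ∀ᵐ ω ∂P, ∀ x, P (F ⁻¹' {x}) = 0 → F ω ≠ x :=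
    ae_all_iff.2 fun x => Filter.eventually_imp_distrib_left.2 measure_eq_zero_iff_ae_notMem.1
  exact havoid.mono fun ω hω hzero => hω _ hzero rfl

lemma ae_measureReal_fiber_pos [Countable S] [IsFiniteMeasure P] (F : Ω → S) :
    ∀ᵐ ω ∂P, 0 < P.real (F ⁻¹' {F ω}) :=
  (ae_measure_fiber_ne_zero P F).mono fun _ hω => ENNReal.toReal_pos hω (measure_ne_top _ _)

lemma entOf_eq_sum {s : Finset S} (hs : ∀ᵐ ω ∂P, F ω ∈ s) :
    entOf P F = ∑ x ∈ s, P.real (F ⁻¹' {x}) * -logb 2 (P.real (F ⁻¹' {x})) := by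
  refine (tsum_eq_sum fun x hx => ?_).trans (Finset.sum_congr rfl fun x _ => (mul_neg _ _).symm)
  have hnull : P (F ⁻¹' {x}) = 0 :=
    measure_mono_null (fun ω (hω : F ω = x) => show F ω ∉ s from hω ▸ hx) hs
  simp only [hnull, ENNReal.toReal_zero, zero_mul, neg_zero]

lemma entOf_comp_of_injective (P : Measure Ω) (F : Ω → S) {φ : S → T} (hφ : φ.Injective) :
    entOf P (fun ω => φ (F ω)) = entOf P F := by
  have hfiber (x : S) : (fun ω => φ (F ω)) ⁻¹' {φ x} = F ⁻¹' {x} := by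
    ext ω
    exact hφ.eq_iff
  have hsupp : Function.support (fun y : T => -((P ((fun ω => φ (F ω)) ⁻¹' {y})).toReal *
      logb 2 (P ((fun ω => φ (F ω)) ⁻¹' {y})).toReal)) ⊆ Set.range φ := by
    refine Function.support_subset_iff'.2 fun y hy => ?_
    have hempty : (fun ω => φ (F ω)) ⁻¹' {y} = ∅ :=
      Set.eq_empty_of_forall_notMem fun ω hω => hy ⟨F ω, hω⟩
    simp only [hempty, measure_empty, ENNReal.toReal_zero, zero_mul, neg_zero]
  simp only [entOf, ← hφ.tsum_eq hsupp, hfiber]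

lemma entOf_congr [MeasurableSpace S] [MeasurableSingletonClass S] {F' : Ω' → S}
    (h : IdentDistrib F F' P P') : entOf P F = entOf P' F' := by
  have hfiber (x : S) : P (F ⁻¹' {x}) = P' (F' ⁻¹' {x}) :=
    h.measure_mem_eq (measurableSet_singleton x)
  simp only [entOf, hfiber]

-- The summand is the joint law of conditionally independent copies of `F` and `G` given the
-- common value `φ(F) = ψ(G)`.
lemma sum_mul_div_fiber_le_one [IsProbabilityMeasure P] [MeasurableSpace S]
    [MeasurableSingletonClass S] [MeasurableSpace T] [MeasurableSingletonClass T] [DecidableEq U]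
    {G : Ω → T} (hF : Measurable F) (hG : Measurable G) {φ : S → U} {ψ : T → U}
    (h : ∀ᵐ ω ∂P, φ (F ω) = ψ (G ω)) (s : Finset S) {t : Finset T} (ht : ∀ᵐ ω ∂P, G ω ∈ t) :
    ∑ z ∈ s ×ˢ t with ψ z.2 = φ z.1, P.real (F ⁻¹' {z.1}) * P.real (G ⁻¹' {z.2}) /
      P.real ((fun ω => φ (F ω)) ⁻¹' {φ z.1}) ≤ 1 := by
  have hfiber (x : S) : ∑ y ∈ t with ψ y = φ x, P.real (G ⁻¹' {y}) =
      P.real ((fun ω => φ (F ω)) ⁻¹' {φ x}) := by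
    rw [sum_measureReal_preimage_singleton _ fun y _ => hG (measurableSet_singleton y)]
    refine measureReal_congr (Filter.eventuallyEq_set.2 ?_)
    filter_upwards [h, ht] with ω hω hωt
    simp only [Set.mem_preimage, Finset.mem_coe, Finset.mem_filter, hωt, hω, true_and,
      Set.mem_singleton_iff]
  rw [Finset.sum_finset_product _ s (fun x => {y ∈ t | ψ y = φ x})
    fun z => by simp only [Finset.mem_filter, Finset.mem_product, and_assoc]]
  calc _ ≤ ∑ x ∈ s, P.real (F ⁻¹' {x}) := Finset.sum_le_sum fun x _ => by
        simp only [← Finset.sum_div, ← Finset.mul_sum, hfiber]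
        exact div_le_of_le_mul₀ measureReal_nonneg measureReal_nonneg le_rfl
    _ ≤ 1 := by
        rw [sum_measureReal_preimage_singleton _ fun x _ => hF (measurableSet_singleton x)]
        exact measureReal_le_one

end Fibres

variable {Ω S T U : Type*} [MeasurableSpace Ω]
  [MeasurableSpace S] [MeasurableSingletonClass S] [Countable S]
  [MeasurableSpace T] [MeasurableSingletonClass T] [Countable T]
  {P : Measure Ω} {F : Ω → S} {G : Ω → T}

lemma restrict_map_finset (hF : Measurable F) {s : Finset S} (hs : ∀ᵐ ω ∂P, F ω ∈ s) :
    (P.map F).restrict s = P.map F :=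
  Measure.restrict_eq_self_of_ae_mem ((ae_map_iff hF.aemeasurable .of_discrete).2 hs)

section Finite

variable [IsFiniteMeasure P]

lemma FinitelyValued.integrable_comp (hF : FinitelyValued F P) (g : S → ℝ) :
    Integrable (fun ω => g (F ω)) P := by
  obtain ⟨s, hs⟩ := hF.exists_finset
  have hg : IntegrableOn g s (P.map F) := .finset
  rw [IntegrableOn, restrict_map_finset hF.measurable hs] at hg
  exact hg.comp_measurable hF.measurable

lemma integral_comp_eq_sum (hF : Measurable F) {s : Finset S} (hs : ∀ᵐ ω ∂P, F ω ∈ s)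
    (g : S → ℝ) : ∫ ω, g (F ω) ∂P = ∑ x ∈ s, P.real (F ⁻¹' {x}) * g x := by
  rw [← integral_map hF.aemeasurable Measurable.of_discrete.aestronglyMeasurable,
    ← restrict_map_finset hF hs, setIntegral_finset s .finset]
  simp only [map_measureReal_apply hF (measurableSet_singleton _), smul_eq_mul]

lemma integral_div_mul_fiber_le_one (hF : Measurable F) {s : Finset S} (hs : ∀ᵐ ω ∂P, F ω ∈ s)
    {q : S → ℝ} (hq : ∀ x ∈ s, 0 ≤ q x) {C : ℝ} (hC0 : 0 < C) (hC : ∑ x ∈ s, q x ≤ C) :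
    ∫ ω, q (F ω) / (C * P.real (F ⁻¹' {F ω})) ∂P ≤ 1 := by
  rw [integral_comp_eq_sum hF hs fun x => q x / (C * P.real (F ⁻¹' {x}))]
  calc _ ≤ ∑ x ∈ s, q x / C := by
        refine Finset.sum_le_sum fun x hx => ?_
        rcases eq_or_ne (P.real (F ⁻¹' {x})) 0 with h0 | h0
        · rw [h0, zero_mul]
          exact div_nonneg (hq x hx) hC0.le
        · exact le_of_eq (by field_simp)
    _ ≤ 1 := by rwa [← Finset.sum_div, div_le_one hC0]

lemma FinitelyValued.integrable_surprisal (hF : FinitelyValued F P) :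
    Integrable (surprisal P F) P :=
  hF.integrable_comp fun x => -logb 2 (P.real (F ⁻¹' {x}))

lemma FinitelyValued.entOf_eq_integral_surprisal (hF : FinitelyValued F P) :
    entOf P F = ∫ ω, surprisal P F ω ∂P := by
  obtain ⟨s, hs⟩ := hF.exists_finset
  rw [entOf_eq_sum hs]
  exact (integral_comp_eq_sum hF.measurable hs fun x => -logb 2 (P.real (F ⁻¹' {x}))).symm

lemma FinitelyValued.entOf_comp_le (hF : FinitelyValued F P) (φ : S → T) :
    entOf P (fun ω => φ (F ω)) ≤ entOf P F := by
  rw [hF.entOf_eq_integral_surprisal, (hF.comp φ).entOf_eq_integral_surprisal]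
  refine integral_mono_ae (hF.comp φ).integrable_surprisal hF.integrable_surprisal ?_
  filter_upwards [ae_measureReal_fiber_pos F] with ω hω
  exact neg_le_neg (logb_le_logb_of_le one_lt_two hω (measureReal_mono fun _ => congrArg φ))

end Finite

variable [IsProbabilityMeasure P]

-- Gibbs' inequality: `log t ≤ t - 1` applied to `t = q / (C p)` and averaged over the law `p`.
lemma FinitelyValued.entOf_le_crossEntropy (hF : FinitelyValued F P) {s : Finset S}
    (hs : ∀ᵐ ω ∂P, F ω ∈ s) {q : S → ℝ} (hq : ∀ x ∈ s, 0 ≤ q x)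
    (hpos : ∀ᵐ ω ∂P, 0 < q (F ω)) {C : ℝ} (hC : ∑ x ∈ s, q x ≤ C) :
    entOf P F ≤ ∫ ω, -logb 2 (q (F ω)) ∂P + logb 2 C := by
  set p : S → ℝ := fun x => P.real (F ⁻¹' {x})
  have hC0 : 0 < C := by
    obtain ⟨ω, hωs, hω⟩ := (hs.and hpos).exists
    exact hω.trans_le ((Finset.single_le_sum hq hωs).trans hC)
  have hp : ∀ᵐ ω ∂P, 0 < p (F ω) := ae_measureReal_fiber_pos F
  have hratio : ∀ᵐ ω ∂P, logb 2 (q (F ω)) - logb 2 (p (F ω)) - logb 2 C ≤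
      (q (F ω) / (C * p (F ω)) - 1) / log 2 := by
    filter_upwards [hpos, hp] with ω hqω hpω
    rw [sub_sub, add_comm, ← logb_mul hC0.ne' hpω.ne', ← logb_div hqω.ne' (by positivity), logb]
    gcongr
    exact log_le_sub_one_of_pos (by positivity)
  have hmean : ∫ ω, q (F ω) / (C * p (F ω)) ∂P ≤ 1 :=
    integral_div_mul_fiber_le_one hF.measurable hs hq hC0 hC
  have hint (g : S → ℝ) : Integrable (fun ω => g (F ω)) P := hF.integrable_comp g
  have hlog := integral_mono_ae (hint fun x => logb 2 (q x) - logb 2 (p x) - logb 2 C)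
    (hint fun x => (q x / (C * p x) - 1) / log 2) hratio
  rw [integral_sub (hint fun x => logb 2 (q x) - logb 2 (p x)) (integrable_const _),
    integral_sub (hint fun x => logb 2 (q x)) (hint fun x => logb 2 (p x)), integral_div,
    integral_sub (hint fun x => q x / (C * p x)) (integrable_const _), integral_const,
    integral_const, probReal_univ, one_smul, one_smul] at hlog
  have hnonpos : (∫ ω, q (F ω) / (C * p (F ω)) ∂P - 1) / log 2 ≤ 0 :=
    div_nonpos_of_nonpos_of_nonneg (sub_nonpos.2 hmean) (log_pos one_lt_two).le
  have hent : entOf P F = -∫ ω, logb 2 (p (F ω)) ∂P := by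
    rw [hF.entOf_eq_integral_surprisal, ← integral_neg]
    rfl
  rw [hent, integral_neg]
  linarith

lemma FinitelyValued.entOf_le_add_logb_card (hG : FinitelyValued G P) (hF : Measurable F)
    {N : ℝ} {t : T → Finset S} (ht : ∀ y, ((t y).card : ℝ) ≤ N) (hmem : ∀ᵐ ω ∂P, F ω ∈ t (G ω)) :
    entOf P F ≤ entOf P G + logb 2 N := by
  classical
  obtain ⟨u, hu⟩ := hG.exists_finset
  have hFfin : FinitelyValued F P :=
    ⟨hF, u.biUnion t, by
      filter_upwards [hu, hmem] with ω hω hω' using Finset.mem_biUnion.2 ⟨G ω, hω, hω'⟩⟩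
  have hGF := hG.prodMk hFfin
  set s := (u ×ˢ u.biUnion t).filter fun z => z.2 ∈ t z.1
  have hmem_s (z : T × S) : z ∈ s ↔ z.1 ∈ u ∧ z.2 ∈ t z.1 := by
    simp only [s, Finset.mem_filter, Finset.mem_product, Finset.mem_biUnion]
    exact ⟨fun h => ⟨h.1.1, h.2⟩, fun h => ⟨⟨h.1, z.1, h⟩, h.2⟩⟩
  have hs : ∀ᵐ ω ∂P, (G ω, F ω) ∈ s := by
    filter_upwards [hu, hmem] with ω hω hω' using (hmem_s _).2 ⟨hω, hω'⟩
  have hmass : ∑ y ∈ u, P.real (G ⁻¹' {y}) = 1 := by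
    simpa using (integral_comp_eq_sum hG.measurable hu fun _ => 1).symm
  have hsum : ∑ z ∈ s, P.real (G ⁻¹' {z.1}) ≤ N := by
    calc ∑ z ∈ s, P.real (G ⁻¹' {z.1}) = ∑ y ∈ u, ∑ _x ∈ t y, P.real (G ⁻¹' {y}) :=
          Finset.sum_finset_product s u t hmem_s
      _ ≤ ∑ y ∈ u, N * P.real (G ⁻¹' {y}) := Finset.sum_le_sum fun y _ => by
          rw [Finset.sum_const, nsmul_eq_mul]
          exact mul_le_mul_of_nonneg_right (ht y) measureReal_nonneg
      _ = N := by rw [← Finset.mul_sum, hmass, mul_one]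
  calc entOf P F ≤ entOf P (fun ω => (G ω, F ω)) := hGF.entOf_comp_le Prod.snd
    _ ≤ ∫ ω, surprisal P G ω ∂P + logb 2 N :=
      hGF.entOf_le_crossEntropy hs (fun _ _ => measureReal_nonneg)
        (ae_measureReal_fiber_pos G) hsum
    _ = entOf P G + logb 2 N := by rw [hG.entOf_eq_integral_surprisal]

variable [MeasurableSpace U] [MeasurableSingletonClass U] [Countable U]

lemma integral_surprisal_add_sub (hF : FinitelyValued F P) (hG : FinitelyValued G P) {K : Ω → U}
    (hK : FinitelyValued K P) :
    ∫ ω, (surprisal P F ω + surprisal P G ω - surprisal P K ω) ∂P =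
      entOf P F + entOf P G - entOf P K := by
  rw [hF.entOf_eq_integral_surprisal, hG.entOf_eq_integral_surprisal,
    hK.entOf_eq_integral_surprisal,
    ← integral_add hF.integrable_surprisal hG.integrable_surprisal]
  exact integral_sub (hF.integrable_surprisal.add hG.integrable_surprisal) hK.integrable_surprisal

lemma entOf_submodular (hF : FinitelyValued F P) (hG : FinitelyValued G P) {φ : S → U}
    {ψ : T → U} (h : ∀ᵐ ω ∂P, φ (F ω) = ψ (G ω)) :
    entOf P (fun ω => (F ω, G ω)) + entOf P (fun ω => φ (F ω)) ≤ entOf P F + entOf P G := by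
  classical
  obtain ⟨s, hs⟩ := hF.exists_finset
  obtain ⟨t, ht⟩ := hG.exists_finset
  have hF0 := ae_measureReal_fiber_pos (P := P) F
  have hG0 := ae_measureReal_fiber_pos (P := P) G
  have hK0 := ae_measureReal_fiber_pos (P := P) fun ω => φ (F ω)
  have hmem : ∀ᵐ ω ∂P, (F ω, G ω) ∈ {z ∈ s ×ˢ t | ψ z.2 = φ z.1} := by
    filter_upwards [hs, ht, h] with ω h₁ h₂ h₃
    exact Finset.mem_filter.2 ⟨Finset.mk_mem_product h₁ h₂, h₃.symm⟩
  have hGibbs := (hF.prodMk hG).entOf_le_crossEntropy hmem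
    (q := fun z => P.real (F ⁻¹' {z.1}) * P.real (G ⁻¹' {z.2}) /
      P.real ((fun ω => φ (F ω)) ⁻¹' {φ z.1}))
    (fun _ _ => div_nonneg (mul_nonneg measureReal_nonneg measureReal_nonneg) measureReal_nonneg)
    (by filter_upwards [hF0, hG0, hK0] with ω h₁ h₂ h₃ using div_pos (mul_pos h₁ h₂) h₃)
    (sum_mul_div_fiber_le_one hF.measurable hG.measurable h s ht)
  have hsplit : ∀ᵐ ω ∂P, -logb 2 (P.real (F ⁻¹' {F ω}) * P.real (G ⁻¹' {G ω}) /
      P.real ((fun ω => φ (F ω)) ⁻¹' {φ (F ω)})) =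
        surprisal P F ω + surprisal P G ω - surprisal P (fun ω => φ (F ω)) ω := by
    filter_upwards [hF0, hG0, hK0] with ω h₁ h₂ h₃
    rw [logb_div (mul_pos h₁ h₂).ne' h₃.ne', logb_mul h₁.ne' h₂.ne']
    simp only [surprisal]
    ring
  rw [integral_congr_ae hsplit, logb_one, add_zero,
    integral_surprisal_add_sub hF hG (hF.comp φ)] at hGibbs
  linarith

lemma entOf_prodMk_le (hF : FinitelyValued F P) (hG : FinitelyValued G P) :
    entOf P (fun ω => (F ω, G ω)) ≤ entOf P F + entOf P G := by
  have hsub := entOf_submodular hF hG (φ := fun _ => ()) (ψ := fun _ => ())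
    (.of_forall fun _ => rfl)
  have htriv : entOf P (fun _ : Ω => ()) = 0 := by simp [entOf]
  linarith

lemma entOf_prodMk_of_indepFun (hF : FinitelyValued F P) (hG : FinitelyValued G P)
    (hind : F ⟂ᵢ[P] G) : entOf P (fun ω => (F ω, G ω)) = entOf P F + entOf P G := by
  rw [(hF.prodMk hG).entOf_eq_integral_surprisal, hF.entOf_eq_integral_surprisal,
    hG.entOf_eq_integral_surprisal,
    ← integral_add hF.integrable_surprisal hG.integrable_surprisal]
  refine integral_congr_ae ?_
  filter_upwards [ae_measureReal_fiber_pos F, ae_measureReal_fiber_pos G] with ω h₁ h₂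
  have hprod : P.real ((fun ω => (F ω, G ω)) ⁻¹' {(F ω, G ω)}) =
      P.real (F ⁻¹' {F ω}) * P.real (G ⁻¹' {G ω}) := by
    rw [← Set.singleton_prod_singleton, Set.mk_preimage_prod]
    simpa only [measureReal_def, ENNReal.toReal_mul] using congrArg ENNReal.toReal
      (hind.measure_inter_preimage_eq_mul _ _ (measurableSet_singleton (F ω))
        (measurableSet_singleton (G ω)))
  simp only [surprisal, hprod]
  rw [logb_mul h₁.ne' h₂.ne', neg_add]

end Entropy

section CondIndepCopies

variable {Ω S T : Type*} [MeasurableSpace Ω]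
  [MeasurableSpace S] [MeasurableSingletonClass S] [Countable S]
  [MeasurableSpace T] [MeasurableSingletonClass T] [Countable T]
  {P : Measure Ω} {F : Ω → S} {K : Ω → T}

/-- The joint law of two copies of a `P`-distributed point that are conditionally independent
given that `K` takes the same value at both. -/
noncomputable def condIndepCopies {Ω T : Type*} [MeasurableSpace Ω] (P : Measure Ω) (K : Ω → T) :
    Measure (Ω × Ω) :=
  (P.prod P).withDensity ({z | K z.2 = K z.1}.indicator fun z => (P (K ⁻¹' {K z.1}))⁻¹)

namespace condIndepCopies

lemma measurableSet_fiber_eq (hK : Measurable K) : MeasurableSet {z : Ω × Ω | K z.2 = K z.1} :=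
  (hK.prodMap hK) (MeasurableSet.of_discrete (s := {t : T × T | t.2 = t.1}))

lemma measurable_density (hK : Measurable K) :
    Measurable ({z : Ω × Ω | K z.2 = K z.1}.indicator fun z => (P (K ⁻¹' {K z.1}))⁻¹) :=
  ((Measurable.of_discrete (f := fun t => (P (K ⁻¹' {t}))⁻¹)).comp
    (hK.comp measurable_fst)).indicator (measurableSet_fiber_eq hK)

lemma ae_fiber_eq (hK : Measurable K) : ∀ᵐ z ∂condIndepCopies P K, K z.2 = K z.1 := by
  rw [condIndepCopies, ae_withDensity_iff (measurable_density hK)]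
  exact .of_forall fun z => Set.mem_of_indicator_ne_zero

variable [IsProbabilityMeasure P]

lemma apply_prod (hK : Measurable K) {A B : Set Ω} (hA : MeasurableSet A) (hB : MeasurableSet B) :
    condIndepCopies P K (A ×ˢ B) =
      ∫⁻ ω in A, (P (K ⁻¹' {K ω}))⁻¹ * P (K ⁻¹' {K ω} ∩ B) ∂P := by
  rw [condIndepCopies, withDensity_apply _ (hA.prod hB),
    setLIntegral_prod _ (measurable_density hK).aemeasurable]
  refine lintegral_congr fun ω => ?_
  have hfiber : MeasurableSet (K ⁻¹' {K ω}) := hK (measurableSet_singleton _)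
  rw [← Measure.restrict_apply hfiber]
  exact lintegral_indicator_const (μ := P.restrict B) hfiber (P (K ⁻¹' {K ω}))⁻¹

lemma measurePreserving_fst (hK : Measurable K) :
    MeasurePreserving Prod.fst (condIndepCopies P K) P := by
  refine ⟨measurable_fst, Measure.ext fun A hA => ?_⟩
  rw [Measure.map_apply measurable_fst hA, ← Set.prod_univ, apply_prod hK hA .univ]
  simp only [Set.inter_univ]
  rw [← setLIntegral_one]
  refine lintegral_congr_ae (ae_restrict_of_ae ?_)
  filter_upwards [ae_measure_fiber_ne_zero P K] with ω hω
    using ENNReal.inv_mul_cancel hω (measure_ne_top _ _)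

lemma measurePreserving_swap (hK : Measurable K) :
    MeasurePreserving Prod.swap (condIndepCopies P K) (condIndepCopies P K) := by
  refine ⟨measurable_swap, Measure.ext fun C hC => ?_⟩
  rw [Measure.map_apply measurable_swap hC, condIndepCopies, withDensity_apply _ hC,
    withDensity_apply _ (measurable_swap hC),
    ← Measure.measurePreserving_swap.setLIntegral_comp_preimage hC (measurable_density hK)]
  congr 1 with z
  by_cases hz : K z.1 = K z.2 <;> simp [Set.indicator, hz, Ne.symm]

lemma measurePreserving_snd (hK : Measurable K) :
    MeasurePreserving Prod.snd (condIndepCopies P K) P :=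
  (measurePreserving_fst hK).comp (measurePreserving_swap hK)

lemma isProbabilityMeasure (hK : Measurable K) : IsProbabilityMeasure (condIndepCopies P K) :=
  ⟨by rw [← Set.preimage_univ (f := Prod.fst),
    (measurePreserving_fst hK).measure_preimage nullMeasurableSet_univ, measure_univ]⟩

lemma measureReal_fiber_prodMk (hF : Measurable F) {φ : S → T} {x y : S} (hxy : φ y = φ x) :
    (condIndepCopies P fun ω => φ (F ω)).real
        ((fun z : Ω × Ω => (F z.1, F z.2)) ⁻¹' {(x, y)}) =
      P.real (F ⁻¹' {x}) * P.real (F ⁻¹' {y}) / P.real ((fun ω => φ (F ω)) ⁻¹' {φ x}) := by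
  have hfiber (x : S) : MeasurableSet (F ⁻¹' {x}) := hF (measurableSet_singleton x)
  have hconst : ∫⁻ ω in F ⁻¹' {x}, (P ((fun ω => φ (F ω)) ⁻¹' {φ (F ω)}))⁻¹ *
      P ((fun ω => φ (F ω)) ⁻¹' {φ (F ω)} ∩ F ⁻¹' {y}) ∂P =
      ∫⁻ _ω in F ⁻¹' {x}, (P ((fun ω => φ (F ω)) ⁻¹' {φ x}))⁻¹ * P (F ⁻¹' {y}) ∂P := by
    refine setLIntegral_congr_fun (hfiber x) fun ω (hω : F ω = x) => ?_
    have hsub : F ⁻¹' {y} ⊆ (fun ω => φ (F ω)) ⁻¹' {φ x} :=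
      fun ω' hω' => (congrArg φ hω').trans hxy
    simp only [hω, Set.inter_eq_right.2 hsub]
  have hmeas : Measurable fun ω => φ (F ω) := (Measurable.of_discrete (f := φ)).comp hF
  rw [measureReal_def, ← Set.singleton_prod_singleton,
    show (fun z : Ω × Ω => (F z.1, F z.2)) ⁻¹' {x} ×ˢ {y} = (F ⁻¹' {x}) ×ˢ (F ⁻¹' {y}) from rfl,
    apply_prod hmeas (hfiber x) (hfiber y), hconst, setLIntegral_const, ENNReal.toReal_mul,
    ENNReal.toReal_mul, ENNReal.toReal_inv]
  simp only [measureReal_def]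
  ring

end condIndepCopies

lemma identDistrib_comp_measurePreserving {Ω Ω' S : Type*} [MeasurableSpace Ω]
    [MeasurableSpace Ω'] [MeasurableSpace S] {P : Measure Ω} {P' : Measure Ω'} {F : Ω → S}
    {τ : Ω' → Ω} (hF : Measurable F) (hτ : MeasurePreserving τ P' P) :
    IdentDistrib (fun ω => F (τ ω)) F P' P where
  aemeasurable_fst := (hF.comp hτ.measurable).aemeasurable
  aemeasurable_snd := hF.aemeasurable
  map_eq := by rw [← hτ.map_eq, Measure.map_map hF hτ.measurable]; rfl

lemma entOf_condIndepCopies [IsProbabilityMeasure P] (hF : FinitelyValued F P) (φ : S → T) :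
    entOf (condIndepCopies P fun ω => φ (F ω)) (fun z => (F z.1, F z.2)) =
      2 * entOf P F - entOf P fun ω => φ (F ω) := by
  set Q := condIndepCopies P fun ω => φ (F ω)
  have hK := (hF.comp φ).measurable
  have hfst : MeasurePreserving Prod.fst Q P := condIndepCopies.measurePreserving_fst hK
  have hsnd : MeasurePreserving Prod.snd Q P := condIndepCopies.measurePreserving_snd hK
  have : IsProbabilityMeasure Q := condIndepCopies.isProbabilityMeasure hK
  have hF₁ := hF.comp_measurePreserving hfst
  have hF₂ := hF.comp_measurePreserving hsnd
  have hlaw₁ := identDistrib_comp_measurePreserving hF.measurable hfst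
  have hlaw₂ := identDistrib_comp_measurePreserving hF.measurable hsnd
  have hlawK := identDistrib_comp_measurePreserving hK hfst
  have hsplit : surprisal Q (fun z => (F z.1, F z.2)) =ᵐ[Q] fun z =>
      surprisal Q (fun z => F z.1) z + surprisal Q (fun z => F z.2) z -
        surprisal Q (fun z => φ (F z.1)) z := by
    filter_upwards [condIndepCopies.ae_fiber_eq hK, ae_measureReal_fiber_pos fun z => F z.1,
      ae_measureReal_fiber_pos fun z => F z.2,
      ae_measureReal_fiber_pos fun z : Ω × Ω => φ (F z.1)] with z hz h₁ h₂ h₃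
    have hjoint := condIndepCopies.measureReal_fiber_prodMk (P := P) hF.measurable hz
    rw [measureReal_def P, measureReal_def P, measureReal_def P,
      ← hlaw₁.measure_mem_eq (measurableSet_singleton (F z.1)),
      ← hlaw₂.measure_mem_eq (measurableSet_singleton (F z.2)),
      ← hlawK.measure_mem_eq (measurableSet_singleton (φ (F z.1))),
      ← measureReal_def, ← measureReal_def, ← measureReal_def] at hjoint
    simp only [surprisal]
    rw [hjoint, logb_div (mul_pos h₁ h₂).ne' h₃.ne', logb_mul h₁.ne' h₂.ne']
    ring
  rw [(hF₁.prodMk hF₂).entOf_eq_integral_surprisal, integral_congr_ae hsplit,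
    integral_surprisal_add_sub hF₁ hF₂ (hF₁.comp φ), entOf_congr hlaw₁, entOf_congr hlaw₂,
    entOf_congr hlawK, two_mul]

end CondIndepCopies

section SumDifference

variable {Ω G : Type*} [MeasurableSpace Ω] [MeasurableSpace G] [MeasurableSingletonClass G]
  [Countable G] [AddCommGroup G] {P : Measure Ω} {A B C X Y : Ω → G}

lemma FinitelyValued.add (hA : FinitelyValued A P) (hB : FinitelyValued B P) :
    FinitelyValued (fun ω => A ω + B ω) P :=
  (hA.prodMk hB).comp fun z => z.1 + z.2

lemma FinitelyValued.sub (hA : FinitelyValued A P) (hB : FinitelyValued B P) :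
    FinitelyValued (fun ω => A ω - B ω) P :=
  (hA.prodMk hB).comp fun z => z.1 - z.2

variable [IsProbabilityMeasure P]

lemma entOf_le_entOf_add (hA : FinitelyValued A P) (hB : FinitelyValued B P) (hind : A ⟂ᵢ[P] B) :
    entOf P A ≤ entOf P fun ω => A ω + B ω := by
  have hrecover := ((hA.add hB).prodMk hB).entOf_comp_le fun z => (z.1 - z.2, z.2)
  have hle := entOf_prodMk_le (hA.add hB) hB
  simp only [add_sub_cancel_right] at hrecover
  rw [entOf_prodMk_of_indepFun hA hB hind] at hrecover
  linarith

-- Kaimanovich–Vershik–Madiman: `A + B + C` is a function of `(A + B, C)` and of `(A, B + C)`.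
lemma entOf_add_add_le (hA : FinitelyValued A P) (hB : FinitelyValued B P)
    (hC : FinitelyValued C P) (hAB : A ⟂ᵢ[P] B) (hABC : (fun ω => (A ω, B ω)) ⟂ᵢ[P] C) :
    entOf P (fun ω => A ω + B ω + C ω) + entOf P B ≤
      entOf P (fun ω => A ω + B ω) + entOf P fun ω => B ω + C ω := by
  have hsubmod := entOf_submodular ((hA.add hB).prodMk hC) (hA.prodMk (hB.add hC))
    (φ := fun z => z.1 + z.2) (ψ := fun z => z.1 + z.2) (.of_forall fun ω => add_assoc _ _ _)
  have hrecover := (((hA.add hB).prodMk hC).prodMk (hA.prodMk (hB.add hC))).entOf_comp_le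
    fun z => ((z.2.1, z.1.1 - z.2.1), z.1.2)
  simp only [add_sub_cancel_left] at hrecover
  rw [entOf_prodMk_of_indepFun (hA.prodMk hB) hC hABC,
    entOf_prodMk_of_indepFun hA hB hAB] at hrecover
  have hleft := entOf_prodMk_le (hA.add hB) hC
  have hright := entOf_prodMk_le hA (hB.add hC)
  linarith

-- `A₃ - B₃ = (A₃ + B₂) - (A₁ + B₃) + A₂ - B₁` is a function of `(A₃, B₃)` and of the four terms on
-- the right, which together determine all six variables.
lemma entOf_prodMk_add_entOf_sub_le {A₁ B₁ A₂ B₂ A₃ B₃ : Ω → G} (hA₁ : FinitelyValued A₁ P)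
    (hB₁ : FinitelyValued B₁ P) (hA₂ : FinitelyValued A₂ P) (hB₂ : FinitelyValued B₂ P)
    (hA₃ : FinitelyValued A₃ P) (hB₃ : FinitelyValued B₃ P)
    (hsum : ∀ᵐ ω ∂P, A₂ ω + B₂ ω = A₁ ω + B₁ ω) :
    entOf P (fun ω => (((A₁ ω, B₁ ω), (A₂ ω, B₂ ω)), (A₃ ω, B₃ ω))) +
        entOf P (fun ω => A₃ ω - B₃ ω) ≤
      entOf P (fun ω => A₃ ω + B₂ ω) + entOf P (fun ω => A₁ ω + B₃ ω) + entOf P A₂ + entOf P B₁ +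
        entOf P A₃ + entOf P B₃ := by
  have hS := (hA₃.add hB₂).prodMk (hA₁.add hB₃)
  have hT := hA₂.prodMk hB₁
  have hV := hA₃.prodMk hB₃
  have hsubmod := entOf_submodular hV (hS.prodMk hT) (φ := fun v => v.1 - v.2)
    (ψ := fun w => w.1.1 - w.1.2 + w.2.1 - w.2.2) <| by
      filter_upwards [hsum] with ω hω
      rw [eq_sub_of_add_eq hω]
      abel
  have hrecover := (hV.prodMk (hS.prodMk hT)).entOf_comp_le fun w =>
    (((w.2.1.2 - w.1.2, w.2.2.2), (w.2.2.1, w.2.1.1 - w.1.1)), w.1)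
  simp only [add_sub_cancel_left, add_sub_cancel_right] at hrecover
  have hjoin := entOf_prodMk_le hS hT
  have hjoinS := entOf_prodMk_le (hA₃.add hB₂) (hA₁.add hB₃)
  have hjoinT := entOf_prodMk_le hA₂ hB₁
  have hjoinV := entOf_prodMk_le hA₃ hB₃
  linarith

lemma entOf_condIndepCopies_prod (hX : FinitelyValued X P) (hY : FinitelyValued Y P)
    (hXY : X ⟂ᵢ[P] Y) :
    entOf ((condIndepCopies P fun ω => X ω + Y ω).prod P)
        (fun z => (((X z.1.1, Y z.1.1), (X z.1.2, Y z.1.2)), (X z.2, Y z.2))) =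
      3 * (entOf P X + entOf P Y) - entOf P fun ω => X ω + Y ω := by
  have hK := (hX.add hY).measurable
  set Q := condIndepCopies P fun ω => X ω + Y ω
  have : IsProbabilityMeasure Q := condIndepCopies.isProbabilityMeasure hK
  have hZ := hX.prodMk hY
  have hcopies := (hZ.comp_measurePreserving (condIndepCopies.measurePreserving_fst hK)).prodMk
    (hZ.comp_measurePreserving (condIndepCopies.measurePreserving_snd hK))
  have hpair : entOf P (fun ω => (X ω, Y ω)) = entOf P X + entOf P Y :=
    entOf_prodMk_of_indepFun hX hY hXY
  have hquad : entOf Q (fun z => ((X z.1, Y z.1), (X z.2, Y z.2))) =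
      2 * entOf P (fun ω => (X ω, Y ω)) - entOf P fun ω => X ω + Y ω :=
    entOf_condIndepCopies hZ fun v => v.1 + v.2
  have hfst := entOf_congr <|
    identDistrib_comp_measurePreserving hcopies.measurable
      (measurePreserving_fst (μ := Q) (ν := P))
  have hsnd := entOf_congr <|
    identDistrib_comp_measurePreserving hZ.measurable
      (measurePreserving_snd (μ := Q) (ν := P))
  rw [entOf_prodMk_of_indepFun (hcopies.comp_measurePreserving measurePreserving_fst)
    (hZ.comp_measurePreserving measurePreserving_snd)
    (indepFun_prod hcopies.measurable hZ.measurable), hfst, hsnd, hquad, hpair]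
  ring

-- Apply the six-variable inequality to `(A₃, B₃) = (X, Y)` and two copies `(A₁, B₁)`, `(A₂, B₂)`
-- of it that are conditionally independent given their sum and jointly independent of `(A₃, B₃)`.
lemma entOf_sub_le (hX : FinitelyValued X P) (hY : FinitelyValued Y P) (hXY : X ⟂ᵢ[P] Y) :
    entOf P (fun ω => X ω - Y ω) ≤
      3 * entOf P (fun ω => X ω + Y ω) - entOf P X - entOf P Y := by
  have hK := (hX.add hY).measurable
  have hjoint := entOf_condIndepCopies_prod hX hY hXY
  set Q := condIndepCopies P fun ω => X ω + Y ω
  have : IsProbabilityMeasure Q := condIndepCopies.isProbabilityMeasure hK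
  have h₁ : MeasurePreserving (fun z => z.1.1) (Q.prod P) P :=
    (condIndepCopies.measurePreserving_fst hK).comp measurePreserving_fst
  have h₂ : MeasurePreserving (fun z => z.1.2) (Q.prod P) P :=
    (condIndepCopies.measurePreserving_snd hK).comp measurePreserving_fst
  have h₃ : MeasurePreserving (fun z => z.2) (Q.prod P) P := measurePreserving_snd
  have hcopies := entOf_prodMk_add_entOf_sub_le (hX.comp_measurePreserving h₁)
    (hY.comp_measurePreserving h₁) (hX.comp_measurePreserving h₂) (hY.comp_measurePreserving h₂)
    (hX.comp_measurePreserving h₃) (hY.comp_measurePreserving h₃)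
    (measurePreserving_fst.quasiMeasurePreserving.ae (condIndepCopies.ae_fiber_eq hK))
  have hlawX {τ} (hτ : MeasurePreserving τ (Q.prod P) P) :=
    identDistrib_comp_measurePreserving hX.measurable hτ
  have hlawY {τ} (hτ : MeasurePreserving τ (Q.prod P) P) :=
    identDistrib_comp_measurePreserving hY.measurable hτ
  have hadd : Measurable fun v : G × G => v.1 + v.2 := .of_discrete
  have hsum₃₂ : entOf (Q.prod P) (fun z => X z.2 + Y z.1.2) = entOf P fun ω => X ω + Y ω :=
    entOf_congr <| ((hlawX h₃).prodMk (hlawY h₂) (indepFun_prod (hY.measurable.comp measurable_snd)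
      hX.measurable).symm hXY).comp hadd
  have hsum₁₃ : entOf (Q.prod P) (fun z => X z.1.1 + Y z.2) = entOf P fun ω => X ω + Y ω :=
    entOf_congr <| ((hlawX h₁).prodMk (hlawY h₃) (indepFun_prod (hX.measurable.comp measurable_fst)
      hY.measurable) hXY).comp hadd
  rw [hjoint, hsum₃₂, hsum₁₃, entOf_congr (hlawX h₂), entOf_congr (hlawX h₃),
    entOf_congr (hlawY h₁), entOf_congr (hlawY h₃),
    entOf_congr (identDistrib_comp_measurePreserving (hX.sub hY).measurable h₃)] at hcopies
  linarith

end SumDifference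

lemma indepFun_prodMk_prodMk_comm {Ω S₁ S₂ T₁ T₂ : Type*} [MeasurableSpace Ω] [MeasurableSpace S₁]
    [MeasurableSpace S₂] [MeasurableSpace T₁] [MeasurableSpace T₂] {P : Measure Ω}
    [IsProbabilityMeasure P] {A : Ω → S₁} {B : Ω → T₁} {C : Ω → S₂} {D : Ω → T₂}
    (hA : Measurable A) (hB : Measurable B) (hC : Measurable C) (hD : Measurable D)
    (hAB : A ⟂ᵢ[P] B) (hCD : C ⟂ᵢ[P] D) (h : (fun ω => (A ω, B ω)) ⟂ᵢ[P] fun ω => (C ω, D ω)) :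
    (fun ω => (A ω, C ω)) ⟂ᵢ[P] fun ω => (B ω, D ω) := by
  have hAC : A ⟂ᵢ[P] C := h.comp measurable_fst measurable_fst
  have hBD : B ⟂ᵢ[P] D := h.comp measurable_snd measurable_snd
  rw [IndepFun_iff_Indep]
  refine IndepSets.indep (hA.prodMk hC).comap_le (hB.prodMk hD).comap_le
    (isPiSystem_prod.comap _) (isPiSystem_prod.comap _)
    (by rw [← generateFrom_prod, MeasurableSpace.comap_generateFrom]; rfl)
    (by rw [← generateFrom_prod, MeasurableSpace.comap_generateFrom]; rfl)
    ((IndepSets_iff _ _ _).2 ?_)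
  rintro _ _ ⟨_, ⟨a, (ha : MeasurableSet a), c, (hc : MeasurableSet c), rfl⟩, rfl⟩
    ⟨_, ⟨b, (hb : MeasurableSet b), d, (hd : MeasurableSet d), rfl⟩, rfl⟩
  rw [Set.mk_preimage_prod, Set.mk_preimage_prod, Set.inter_inter_inter_comm,
    ← Set.mk_preimage_prod, ← Set.mk_preimage_prod,
    h.measure_inter_preimage_eq_mul _ _ (ha.prod hb) (hc.prod hd), Set.mk_preimage_prod,
    Set.mk_preimage_prod, hAB.measure_inter_preimage_eq_mul _ _ ha hb,
    hCD.measure_inter_preimage_eq_mul _ _ hc hd, hAC.measure_inter_preimage_eq_mul _ _ ha hc,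
    hBD.measure_inter_preimage_eq_mul _ _ hb hd, mul_mul_mul_comm]

/-- `Z₁` and `Z₂`, on the probability space of `P'`, are independent copies of the random variable
`Z`, which lives on the probability space of `P`. -/
structure IndepCopies {Ω Ω' S : Type*} [MeasurableSpace Ω] [MeasurableSpace Ω'] [MeasurableSpace S]
    (Z₁ Z₂ : Ω' → S) (Z : Ω → S) (P' : Measure Ω') (P : Measure Ω) : Prop where
  measurable_left : Measurable Z₁
  measurable_right : Measurable Z₂
  identDistrib_left : IdentDistrib Z₁ Z P' P
  identDistrib_right : IdentDistrib Z₂ Z P' P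
  indepFun : Z₁ ⟂ᵢ[P'] Z₂

lemma IndepCopies.comp {Ω Ω' S T : Type*} [MeasurableSpace Ω] [MeasurableSpace Ω']
    [MeasurableSpace S] [MeasurableSpace T] {P : Measure Ω} {P' : Measure Ω'} {Z₁ Z₂ : Ω' → S}
    {Z : Ω → S} (h : IndepCopies Z₁ Z₂ Z P' P) {φ : S → T} (hφ : Measurable φ) :
    IndepCopies (fun ω => φ (Z₁ ω)) (fun ω => φ (Z₂ ω)) (fun ω => φ (Z ω)) P' P where
  measurable_left := hφ.comp h.measurable_left
  measurable_right := hφ.comp h.measurable_right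
  identDistrib_left := h.identDistrib_left.comp hφ
  identDistrib_right := h.identDistrib_right.comp hφ
  indepFun := h.indepFun.comp hφ hφ

lemma entOf_add_add_add_le_of_indepFun {Ω G : Type*} [MeasurableSpace Ω] [MeasurableSpace G]
    [MeasurableSingletonClass G] [Countable G] [AddCommGroup G] {P : Measure Ω}
    [IsProbabilityMeasure P] {U₁ V₁ U₂ V₂ : Ω → G} (hU₁ : FinitelyValued U₁ P)
    (hV₁ : FinitelyValued V₁ P) (hU₂ : FinitelyValued U₂ P) (hV₂ : FinitelyValued V₂ P)
    (hUV₁ : U₁ ⟂ᵢ[P] V₁) (hUV₂ : U₂ ⟂ᵢ[P] V₂)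
    (hind : (fun ω => (U₁ ω, V₁ ω)) ⟂ᵢ[P] fun ω => (U₂ ω, V₂ ω)) :
    entOf P (fun ω => U₁ ω + U₂ ω + V₁ ω + V₂ ω) + entOf P U₁ + entOf P V₂ ≤
      entOf P (fun ω => U₁ ω + V₁ ω) + entOf P (fun ω => U₂ ω + V₂ ω) +
        entOf P fun ω => U₁ ω + V₂ ω := by
  have hadd : Measurable fun v : G × G => v.1 + v.2 := .of_discrete
  have hfour := entOf_add_add_le hV₁ hU₁ (hU₂.add hV₂) hUV₁.symm (hind.comp measurable_swap hadd)
  have hthree := entOf_add_add_le hU₂ hV₂ hU₁ hUV₂ (hind.symm.comp measurable_id measurable_fst)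
  have hperm (ω : Ω) : U₁ ω + V₁ ω + (U₂ ω + V₂ ω) = U₁ ω + U₂ ω + V₁ ω + V₂ ω := by abel
  simp only [add_comm (V₁ _) (U₁ _), hperm] at hfour
  simp only [add_comm _ (U₁ _)] at hthree
  linarith

namespace IndepCopies

variable {Ω Ω' G : Type*} [MeasurableSpace Ω] [MeasurableSpace Ω'] [MeasurableSpace G]
  [MeasurableSingletonClass G] [Countable G] {P : Measure Ω} {P' : Measure Ω'}
  {U V : Ω → G} {U₁ V₁ U₂ V₂ : Ω' → G}

lemma finitelyValued (h : IndepCopies (fun ω => (U₁ ω, V₁ ω)) (fun ω => (U₂ ω, V₂ ω))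
    (fun ω => (U ω, V ω)) P' P) (hU : FinitelyValued U P) (hV : FinitelyValued V P) :
    (FinitelyValued U₁ P' ∧ FinitelyValued V₁ P') ∧ FinitelyValued U₂ P' ∧ FinitelyValued V₂ P' :=
  have h₁ := (hU.prodMk hV).of_identDistrib h.measurable_left h.identDistrib_left.symm
  have h₂ := (hU.prodMk hV).of_identDistrib h.measurable_right h.identDistrib_right.symm
  ⟨⟨h₁.comp Prod.fst, h₁.comp Prod.snd⟩, h₂.comp Prod.fst, h₂.comp Prod.snd⟩

variable [IsProbabilityMeasure P] [IsProbabilityMeasure P'] [AddCommGroup G]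

lemma entOf_add_add_add_le (h : IndepCopies (fun ω => (U₁ ω, V₁ ω)) (fun ω => (U₂ ω, V₂ ω))
    (fun ω => (U ω, V ω)) P' P) (hU : FinitelyValued U P) (hV : FinitelyValued V P)
    (hUV : U ⟂ᵢ[P] V) :
    entOf P' (fun ω => U₁ ω + U₂ ω + V₁ ω + V₂ ω) ≤
      3 * entOf P (fun ω => U ω + V ω) - entOf P U - entOf P V := by
  obtain ⟨⟨hU₁, hV₁⟩, hU₂, hV₂⟩ := h.finitelyValued hU hV
  have hUV₁ := indepFun_of_identDistrib_pair hUV h.identDistrib_left.symm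
  have hUV₂ := indepFun_of_identDistrib_pair hUV h.identDistrib_right.symm
  have hlawU₁ : IdentDistrib U₁ U P' P := h.identDistrib_left.comp measurable_fst
  have hlawV₂ : IdentDistrib V₂ V P' P := h.identDistrib_right.comp measurable_snd
  have hcross := hlawU₁.prodMk hlawV₂ (h.indepFun.comp measurable_fst measurable_snd) hUV
  have hadd : Measurable fun v : G × G => v.1 + v.2 := .of_discrete
  have hsum₁ : entOf P' (fun ω => U₁ ω + V₁ ω) = entOf P fun ω => U ω + V ω :=
    entOf_congr (h.identDistrib_left.comp hadd)
  have hsum₂ : entOf P' (fun ω => U₂ ω + V₂ ω) = entOf P fun ω => U ω + V ω :=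
    entOf_congr (h.identDistrib_right.comp hadd)
  have hsum₃ : entOf P' (fun ω => U₁ ω + V₂ ω) = entOf P fun ω => U ω + V ω :=
    entOf_congr (hcross.comp hadd)
  have hfour := entOf_add_add_add_le_of_indepFun hU₁ hV₁ hU₂ hV₂ hUV₁ hUV₂ h.indepFun
  rw [hsum₁, hsum₂, hsum₃, entOf_congr hlawU₁, entOf_congr hlawV₂] at hfour
  linarith

lemma entOf_sub_add_sub_le (h : IndepCopies (fun ω => (U₁ ω, V₁ ω)) (fun ω => (U₂ ω, V₂ ω))
    (fun ω => (U ω, V ω)) P' P) (hU : FinitelyValued U P) (hV : FinitelyValued V P)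
    (hUV : U ⟂ᵢ[P] V) :
    entOf P' (fun ω => U₁ ω - U₂ ω + V₁ ω - V₂ ω) ≤
      7 * entOf P (fun ω => U ω + V ω) - 3 * entOf P U - 3 * entOf P V := by
  obtain ⟨⟨hU₁, hV₁⟩, hU₂, hV₂⟩ := h.finitelyValued hU hV
  have hadd : Measurable fun v : G × G => v.1 + v.2 := .of_discrete
  have hsum₁ : entOf P' (fun ω => U₁ ω + V₁ ω) = entOf P fun ω => U ω + V ω :=
    entOf_congr (h.identDistrib_left.comp hadd)
  have hsum₂ : entOf P' (fun ω => U₂ ω + V₂ ω) = entOf P fun ω => U ω + V ω :=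
    entOf_congr (h.identDistrib_right.comp hadd)
  have hdiff := entOf_sub_le (hU₁.add hV₁) (hU₂.add hV₂) (h.indepFun.comp hadd hadd)
  simp only [add_sub_add_comm, add_add_add_comm _ (V₁ _)] at hdiff
  have hfour := h.entOf_add_add_add_le hU hV hUV
  simp only [add_assoc (_ + _), ← add_sub_assoc] at hfour hdiff ⊢
  linarith

lemma entOf_add_sub_sub_le (h : IndepCopies (fun ω => (U₁ ω, V₁ ω)) (fun ω => (U₂ ω, V₂ ω))
    (fun ω => (U ω, V ω)) P' P) (hU : FinitelyValued U P) (hV : FinitelyValued V P)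
    (hUV : U ⟂ᵢ[P] V) :
    entOf P' (fun ω => U₁ ω + U₂ ω - V₁ ω - V₂ ω) ≤
      9 * entOf P (fun ω => U ω + V ω) - 4 * entOf P U - 4 * entOf P V := by
  obtain ⟨⟨hU₁, hV₁⟩, hU₂, hV₂⟩ := h.finitelyValued hU hV
  have hadd : Measurable fun v : G × G => v.1 + v.2 := .of_discrete
  have hregroup : (fun ω => (U₁ ω, U₂ ω)) ⟂ᵢ[P'] fun ω => (V₁ ω, V₂ ω) :=
    indepFun_prodMk_prodMk_comm hU₁.measurable hV₁.measurable hU₂.measurable hV₂.measurable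
      (indepFun_of_identDistrib_pair hUV h.identDistrib_left.symm)
      (indepFun_of_identDistrib_pair hUV h.identDistrib_right.symm) h.indepFun
  have hlawU₁ : IdentDistrib U₁ U P' P := h.identDistrib_left.comp measurable_fst
  have hlawV₁ : IdentDistrib V₁ V P' P := h.identDistrib_left.comp measurable_snd
  have hU_le := entOf_le_entOf_add hU₁ hU₂ (h.indepFun.comp measurable_fst measurable_fst)
  have hV_le := entOf_le_entOf_add hV₁ hV₂ (h.indepFun.comp measurable_snd measurable_snd)
  rw [entOf_congr hlawU₁] at hU_le
  rw [entOf_congr hlawV₁] at hV_le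
  have hdiff := entOf_sub_le (hU₁.add hU₂) (hV₁.add hV₂) (hregroup.comp hadd hadd)
  have hfour := h.entOf_add_add_add_le hU hV hUV
  simp only [← sub_sub, ← add_assoc] at hdiff
  linarith

end IndepCopies

/-- The index `k = ⌊2ⁿ x⌋` of the dyadic interval `[k 2⁻ⁿ, (k + 1) 2⁻ⁿ)` containing `x`. It carries
the same information as `Dn n x`, but takes values in a countable discrete group. -/
noncomputable def dyadicFloor (n : ℕ) (x : ℝ) : ℤ := ⌊(2 : ℝ) ^ n * x⌋

/-- The domain `D` is covered by `L` pieces on each of which `f` has a `κ`-Lipschitz inverse. This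
is the part of weak bi-Lipschitzness that bounds the entropy of `X` by that of `f(X)`. -/
def PiecewiseInverseLipschitzOn (f : ℝ → ℝ) (D : Set ℝ) (κ : ℝ) (L : ℕ) : Prop :=
  ∃ R : Fin L → Set ℝ, D ⊆ (⋃ i, R i) ∧
    ∀ i, ∀ x ∈ D ∩ R i, ∀ y ∈ D ∩ R i, |x - y| ≤ κ * |f x - f y|

section DyadicFloor

variable {f : ℝ → ℝ} {D : Set ℝ} {κ x : ℝ} {L : ℕ} {k r : ℤ}

lemma measurable_dyadicFloor (n : ℕ) : Measurable (dyadicFloor n) :=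
  Int.measurable_floor.comp (measurable_const_mul _)

lemma abs_dyadicFloor_add_sub_le {n : ℕ} (h : |dyadicFloor n x - k| ≤ r) (y : ℝ) :
    |dyadicFloor n (x + y) - (k + dyadicFloor n y)| ≤ r + 1 := by
  have hlower := Int.le_floor_add ((2 : ℝ) ^ n * x) (2 ^ n * y)
  have hupper := Int.le_floor_add_floor ((2 : ℝ) ^ n * x) (2 ^ n * y)
  simp only [dyadicFloor, mul_add, abs_le] at h ⊢
  lia

lemma abs_dyadicFloor_sub_sub_le {n : ℕ} (h : |dyadicFloor n x - k| ≤ r) (y : ℝ) :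
    |dyadicFloor n (x - y) - (k - dyadicFloor n y)| ≤ r + 1 := by
  have hlower := Int.le_floor_add ((2 : ℝ) ^ n * (x - y)) (2 ^ n * y)
  have hupper := Int.le_floor_add_floor ((2 : ℝ) ^ n * (x - y)) (2 ^ n * y)
  rw [← mul_add, sub_add_cancel] at hlower hupper
  simp only [dyadicFloor, abs_le] at h ⊢
  lia

lemma abs_dyadicFloor_sub_le {n : ℕ} {y : ℝ} {K : ℕ} (h : 2 ^ n * |x - y| ≤ K) :
    |dyadicFloor n x - dyadicFloor n y| ≤ K := by
  rw [← abs_of_pos (show (0 : ℝ) < 2 ^ n by positivity), ← abs_mul, mul_sub, abs_le] at h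
  have hxy : dyadicFloor n x ≤ dyadicFloor n y + K := by
    rw [dyadicFloor, dyadicFloor, ← Int.floor_add_natCast]
    exact Int.floor_mono (by linarith)
  have hyx : dyadicFloor n y ≤ dyadicFloor n x + K := by
    rw [dyadicFloor, dyadicFloor, ← Int.floor_add_natCast]
    exact Int.floor_mono (by linarith)
  exact abs_le.2 ⟨by lia, by lia⟩

lemma exists_finset_card_le_of_abs_sub_le {s : Set ℤ} {K : ℕ}
    (h : ∀ a ∈ s, ∀ b ∈ s, |a - b| ≤ K) : ∃ t : Finset ℤ, t.card ≤ 2 * K + 1 ∧ s ⊆ t := by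
  rcases s.eq_empty_or_nonempty with rfl | ⟨a, ha⟩
  · exact ⟨∅, Nat.zero_le _, Set.empty_subset _⟩
  · refine ⟨Finset.Icc (a - K) (a + K), ?_, fun b hb => ?_⟩
    · rw [Int.card_Icc]
      lia
    · have hab := abs_le.1 (h b hb a ha)
      exact Finset.mem_coe.2 (Finset.mem_Icc.2 ⟨by lia, by lia⟩)

lemma PiecewiseInverseLipschitzOn.exists_finset_dyadicFloor_mem
    (hf : PiecewiseInverseLipschitzOn f D κ L) (n : ℕ) (k : ℤ) :
    ∃ t : Finset ℤ, t.card ≤ L * (2 * ⌈κ⌉₊ + 1) ∧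
      ∀ x ∈ D, dyadicFloor n (f x) = k → dyadicFloor n x ∈ t := by
  classical
  obtain ⟨R, hcover, hinv⟩ := hf
  have hpiece (i : Fin L) : ∃ t : Finset ℤ, t.card ≤ 2 * ⌈κ⌉₊ + 1 ∧
      dyadicFloor n '' {x ∈ D ∩ R i | dyadicFloor n (f x) = k} ⊆ t := by
    refine exists_finset_card_le_of_abs_sub_le ?_
    rintro _ ⟨x, ⟨hx, hxk⟩, rfl⟩ _ ⟨y, ⟨hy, hyk⟩, rfl⟩
    have hfloor : |2 ^ n * f x - 2 ^ n * f y| < 1 :=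
      Int.abs_sub_lt_one_of_floor_eq_floor (hxk.trans hyk.symm)
    rw [← mul_sub, abs_mul, abs_of_pos (by positivity)] at hfloor
    refine abs_dyadicFloor_sub_le ?_
    calc 2 ^ n * |x - y| ≤ 2 ^ n * (⌈κ⌉₊ * |f x - f y|) := by
          gcongr
          exact (hinv i x hx y hy).trans (by gcongr; exact Nat.le_ceil κ)
      _ = ⌈κ⌉₊ * (2 ^ n * |f x - f y|) := by ring
      _ ≤ ⌈κ⌉₊ := mul_le_of_le_one_right (Nat.cast_nonneg _) hfloor.le
  choose t hcard hsub using hpiece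
  refine ⟨Finset.univ.biUnion t, ?_, fun x hx hxk => ?_⟩
  · simpa using Finset.card_biUnion_le_card_mul Finset.univ t _ fun i _ => hcard i
  · obtain ⟨i, hi⟩ := Set.mem_iUnion.1 (hcover hx)
    exact Finset.mem_biUnion.2 ⟨i, Finset.mem_univ i, hsub i ⟨x, ⟨⟨hx, hi⟩, hxk⟩, rfl⟩⟩

lemma logb_two_natCast_nonneg (L : ℕ) : 0 ≤ logb 2 (L : ℝ) :=
  div_nonneg (log_natCast_nonneg L) (log_nonneg one_le_two)

lemma one_le_logb_two (hκ : 2 ≤ κ) : 1 ≤ logb 2 κ := by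
  rw [← logb_self_eq_one one_lt_two]
  exact logb_le_logb_of_le one_lt_two two_pos hκ

lemma logb_mul_ceil_le (hκ : 2 ≤ κ) (L : ℕ) :
    logb 2 (L * (2 * ⌈κ⌉₊ + 1)) ≤ (logb 2 L + 3) * logb 2 κ := by
  have hfiber : logb 2 (2 * ⌈κ⌉₊ + 1 : ℝ) ≤ 3 * logb 2 κ := by
    have hceil := Nat.ceil_lt_add_one (show 0 ≤ κ by linarith)
    have hcube : 4 * κ ≤ κ ^ 3 := by nlinarith [mul_le_mul hκ hκ two_pos.le (by linarith)]
    calc logb 2 (2 * ⌈κ⌉₊ + 1 : ℝ) ≤ logb 2 (κ ^ 3) :=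
          logb_le_logb_of_le one_lt_two (by positivity) (by linarith)
      _ = 3 * logb 2 κ := by rw [logb_pow, Nat.cast_ofNat]
  rcases L.eq_zero_or_pos with rfl | hL
  · have hκ_log := one_le_logb_two hκ
    simp only [CharP.cast_eq_zero, zero_mul, logb_zero, zero_add]
    positivity
  · rw [logb_mul (by positivity) (by positivity), add_mul]
    exact add_le_add
      (le_mul_of_one_le_right (logb_two_natCast_nonneg L) (one_le_logb_two hκ)) hfiber

end DyadicFloor

section DyadicEntropy

variable {Ω : Type*} [MeasurableSpace Ω] {P : Measure Ω} {X : Ω → ℝ}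

lemma Hn_eq_entOf_dyadicFloor (P : Measure Ω) (n : ℕ) (X : Ω → ℝ) :
    Hn P n X = entOf P fun ω => dyadicFloor n (X ω) :=
  entOf_comp_of_injective P (fun ω => dyadicFloor n (X ω)) (φ := fun k : ℤ => (k : ℝ) / 2 ^ n) <|
    fun _ _ h => Int.cast_injective ((div_left_inj' (by positivity)).1 h)

lemma finitelyValued_dyadicFloor (hX : Measurable X) (hbdd : ∃ c, ∀ᵐ ω ∂P, |X ω| ≤ c) (n : ℕ) :
    FinitelyValued (fun ω => dyadicFloor n (X ω)) P where
  measurable := (measurable_dyadicFloor n).comp hX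
  exists_finset := by
    obtain ⟨c, hc⟩ := hbdd
    refine ⟨Finset.Icc (dyadicFloor n (-c)) (dyadicFloor n c), hc.mono fun ω hω => ?_⟩
    have hmono : Monotone (dyadicFloor n) := fun _ _ h => Int.floor_mono (by gcongr)
    exact Finset.mem_Icc.2 ⟨hmono (abs_le.1 hω).1, hmono (abs_le.1 hω).2⟩

variable [IsProbabilityMeasure P]

lemma entOf_le_add_logb_of_abs_sub_le {F G : Ω → ℤ} (hF : Measurable F) (hG : FinitelyValued G P)
    {r : ℕ} (h : ∀ ω, |F ω - G ω| ≤ r) : entOf P F ≤ entOf P G + logb 2 (2 * r + 1) := by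
  refine hG.entOf_le_add_logb_card hF (t := fun k => Finset.Icc (k - r) (k + r)) (fun k => ?_)
    (.of_forall fun ω => ?_)
  · rw [Int.card_Icc, show (k + r + 1 - (k - r)).toNat = 2 * r + 1 by lia]
    push_cast
    rfl
  · have hω := abs_le.1 (h ω)
    exact Finset.mem_Icc.2 ⟨by lia, by lia⟩

lemma PiecewiseInverseLipschitzOn.Hn_le {f : ℝ → ℝ} {D : Set ℝ} {κ : ℝ} {L : ℕ}
    (hf : PiecewiseInverseLipschitzOn f D κ L) (hκ : 2 ≤ κ) (hX : Measurable X)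
    (hD : ∀ᵐ ω ∂P, X ω ∈ D) (hfX : Measurable fun ω => f (X ω))
    (hbdd : ∃ c, ∀ᵐ ω ∂P, |f (X ω)| ≤ c) (n : ℕ) :
    Hn P n X ≤ Hn P n (fun ω => f (X ω)) + (logb 2 L + 3) * logb 2 κ := by
  choose t hcard hmem using hf.exists_finset_dyadicFloor_mem n
  have hfiber := (finitelyValued_dyadicFloor hfX hbdd n).entOf_le_add_logb_card
    ((measurable_dyadicFloor n).comp hX) (N := L * (2 * ⌈κ⌉₊ + 1))
    (fun k => by exact_mod_cast hcard k) (hD.mono fun ω hω => hmem _ _ hω rfl)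
  rw [Hn_eq_entOf_dyadicFloor, Hn_eq_entOf_dyadicFloor]
  exact hfiber.trans (add_le_add_right (logb_mul_ceil_le hκ L) _)

lemma Hn_le_of_abs_dyadicFloor_sub_le {G : Ω → ℤ} {n : ℕ} (hX : Measurable X)
    (hG : FinitelyValued G P) (h : ∀ ω, |dyadicFloor n (X ω) - G ω| ≤ 3) :
    Hn P n X ≤ entOf P G + 3 := by
  have hround := entOf_le_add_logb_of_abs_sub_le ((measurable_dyadicFloor n).comp hX) hG (r := 3) h
  have hlog : logb 2 (2 * (3 : ℕ) + 1) ≤ 3 := by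
    rw [logb_le_iff_le_rpow one_lt_two (by positivity)]
    norm_num
  rw [Hn_eq_entOf_dyadicFloor]
  exact hround.trans (add_le_add_right hlog _)

lemma entOf_dyadicFloor_add_le {Y : Ω → ℝ} (hX : Measurable X) (hY : Measurable Y)
    (hXbdd : ∃ c, ∀ᵐ ω ∂P, |X ω| ≤ c) (hYbdd : ∃ c, ∀ᵐ ω ∂P, |Y ω| ≤ c) (n : ℕ) :
    entOf P (fun ω => dyadicFloor n (X ω) + dyadicFloor n (Y ω)) ≤
      Hn P n (fun ω => X ω + Y ω) + 2 := by
  have hbdd : ∃ c, ∀ᵐ ω ∂P, |X ω + Y ω| ≤ c := by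
    obtain ⟨a, ha⟩ := hXbdd
    obtain ⟨b, hb⟩ := hYbdd
    exact ⟨a + b, ha.mp (hb.mono fun ω hb ha => (abs_add_le _ _).trans (add_le_add ha hb))⟩
  have hround := entOf_le_add_logb_of_abs_sub_le
    (((measurable_dyadicFloor n).comp hX).add ((measurable_dyadicFloor n).comp hY))
    (finitelyValued_dyadicFloor (hX.add hY) hbdd n) (r := 1) fun ω => by
      rw [abs_sub_comm]
      exact abs_dyadicFloor_add_sub_le (r := 0) (by simp) (Y ω)
  have hlog : logb 2 (2 * (1 : ℕ) + 1) ≤ 2 := by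
    rw [logb_le_iff_le_rpow one_lt_two (by positivity)]
    norm_num
  rw [Hn_eq_entOf_dyadicFloor]
  exact hround.trans (add_le_add_right hlog _)

end DyadicEntropy

namespace IndepCopies

variable {Ω Ω' : Type*} [MeasurableSpace Ω] [MeasurableSpace Ω'] {P : Measure Ω} {P' : Measure Ω'}
  [IsProbabilityMeasure P] [IsProbabilityMeasure P'] {X Y : Ω → ℝ} {X₁ Y₁ X₂ Y₂ : Ω' → ℝ}

lemma Hn_four_sums_le (h : IndepCopies (fun ω => (X₁ ω, Y₁ ω)) (fun ω => (X₂ ω, Y₂ ω))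
    (fun ω => (X ω, Y ω)) P' P) (hX : Measurable X) (hY : Measurable Y)
    (hXbdd : ∃ c, ∀ᵐ ω ∂P, |X ω| ≤ c) (hYbdd : ∃ c, ∀ᵐ ω ∂P, |Y ω| ≤ c) (hXY : X ⟂ᵢ[P] Y)
    (n : ℕ) :
    Hn P' n (fun ω => X₁ ω + X₂ ω + Y₁ ω + Y₂ ω) ≤
        3 * Hn P n (fun ω => X ω + Y ω) - Hn P n X - Hn P n Y + 9 ∧
      Hn P' n (fun ω => X₁ ω - X₂ ω + Y₁ ω - Y₂ ω) ≤
        7 * Hn P n (fun ω => X ω + Y ω) - 3 * Hn P n X - 3 * Hn P n Y + 17 ∧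
      Hn P' n (fun ω => X₁ ω + X₂ ω - Y₁ ω - Y₂ ω) ≤
        9 * Hn P n (fun ω => X ω + Y ω) - 4 * Hn P n X - 4 * Hn P n Y + 21 := by
  have hX₁ : Measurable X₁ := h.measurable_left.fst
  have hY₁ : Measurable Y₁ := h.measurable_left.snd
  have hX₂ : Measurable X₂ := h.measurable_right.fst
  have hY₂ : Measurable Y₂ := h.measurable_right.snd
  have hU := finitelyValued_dyadicFloor hX hXbdd n
  have hV := finitelyValued_dyadicFloor hY hYbdd n
  have hUV := hXY.comp (measurable_dyadicFloor n) (measurable_dyadicFloor n)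
  have hcopies := h.comp ((measurable_dyadicFloor n).prodMap (measurable_dyadicFloor n))
  obtain ⟨⟨hU₁, hV₁⟩, hU₂, hV₂⟩ := hcopies.finitelyValued hU hV
  have hsum := entOf_dyadicFloor_add_le hX hY hXbdd hYbdd n
  have hself (x : ℝ) : |dyadicFloor n x - dyadicFloor n x| ≤ 0 := by simp
  have hadd := Hn_le_of_abs_dyadicFloor_sub_le
    (X := fun ω => X₁ ω + X₂ ω + Y₁ ω + Y₂ ω)
    (by fun_prop) (((hU₁.add hU₂).add hV₁).add hV₂) fun ω =>
      abs_dyadicFloor_add_sub_le (abs_dyadicFloor_add_sub_le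
        (abs_dyadicFloor_add_sub_le (hself (X₁ ω)) (X₂ ω)) (Y₁ ω)) (Y₂ ω)
  have hsub := Hn_le_of_abs_dyadicFloor_sub_le
    (X := fun ω => X₁ ω - X₂ ω + Y₁ ω - Y₂ ω)
    (by fun_prop) (((hU₁.sub hU₂).add hV₁).sub hV₂) fun ω =>
      abs_dyadicFloor_sub_sub_le (abs_dyadicFloor_add_sub_le
        (abs_dyadicFloor_sub_sub_le (hself (X₁ ω)) (X₂ ω)) (Y₁ ω)) (Y₂ ω)
  have hadd_sub := Hn_le_of_abs_dyadicFloor_sub_le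
    (X := fun ω => X₁ ω + X₂ ω - Y₁ ω - Y₂ ω)
    (by fun_prop) (((hU₁.add hU₂).sub hV₁).sub hV₂) fun ω =>
      abs_dyadicFloor_sub_sub_le (abs_dyadicFloor_sub_sub_le
        (abs_dyadicFloor_add_sub_le (hself (X₁ ω)) (X₂ ω)) (Y₁ ω)) (Y₂ ω)
  rw [Hn_eq_entOf_dyadicFloor P n X, Hn_eq_entOf_dyadicFloor P n Y]
  exact ⟨by linarith [hcopies.entOf_add_add_add_le hU hV hUV],
    by linarith [hcopies.entOf_sub_add_sub_le hU hV hUV],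
    by linarith [hcopies.entOf_add_sub_sub_le hU hV hUV]⟩

end IndepCopies

theorem four_functions_entropy_general {Ω Ω' : Type*} [MeasurableSpace Ω] [MeasurableSpace Ω']
    {P : Measure Ω} {P' : Measure Ω'} [IsProbabilityMeasure P] [IsProbabilityMeasure P']
    {X Y : Ω → ℝ} {X₁ Y₁ X₂ Y₂ : Ω' → ℝ} (hX : Measurable X) (hY : Measurable Y)
    (hXY : X ⟂ᵢ[P] Y)
    (h : IndepCopies (fun ω => (X₁ ω, Y₁ ω)) (fun ω => (X₂ ω, Y₂ ω)) (fun ω => (X ω, Y ω)) P' P)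
    {f g : ℝ → ℝ} (hf : Measurable f) (hg : Measurable g)
    (hfbdd : ∃ c, ∀ᵐ ω ∂P, |f (X ω)| ≤ c) (hgbdd : ∃ c, ∀ᵐ ω ∂P, |g (Y ω)| ≤ c)
    {D E : Set ℝ} (hD : ∀ᵐ ω ∂P, X ω ∈ D) (hE : ∀ᵐ ω ∂P, Y ω ∈ E) {κ : ℝ} (hκ : 2 ≤ κ) {L : ℕ}
    (hfD : PiecewiseInverseLipschitzOn f D κ L) (hgE : PiecewiseInverseLipschitzOn g E κ L)
    (n : ℕ) :
    Hn P' n (fun ω => f (X₁ ω) + f (X₂ ω) + g (Y₁ ω) + g (Y₂ ω)) ≤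
        3 * Hn P n (fun ω => f (X ω) + g (Y ω)) - Hn P n X - Hn P n Y +
          (8 * logb 2 L + 45) * logb 2 κ ∧
      Hn P' n (fun ω => f (X₁ ω) - f (X₂ ω) + g (Y₁ ω) - g (Y₂ ω)) ≤
        7 * Hn P n (fun ω => f (X ω) + g (Y ω)) - 3 * Hn P n X - 3 * Hn P n Y +
          (8 * logb 2 L + 45) * logb 2 κ ∧
      Hn P' n (fun ω => f (X₁ ω) + f (X₂ ω) - g (Y₁ ω) - g (Y₂ ω)) ≤
        9 * Hn P n (fun ω => f (X ω) + g (Y ω)) - 4 * Hn P n X - 4 * Hn P n Y +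
          (8 * logb 2 L + 45) * logb 2 κ := by
  have hlogκ := one_le_logb_two hκ
  have hlogL : 0 ≤ logb 2 L * logb 2 κ := mul_nonneg (logb_two_natCast_nonneg L) (by linarith)
  obtain ⟨hadd, hsub, hadd_sub⟩ := (h.comp (hf.prodMap hg)).Hn_four_sums_le
    (hf.comp hX) (hg.comp hY) hfbdd hgbdd (hXY.comp hf hg) n
  have hexpandX := hfD.Hn_le hκ hX hD (hf.comp hX) hfbdd n
  have hexpandY := hgE.Hn_le hκ hY hE (hg.comp hY) hgbdd n
  exact ⟨by linarith, by linarith, by linarith⟩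

lemma WeaklyBiLipschitzOn.exists_abs_le {α : Type*} {X : α → ℝ} {f : ℝ → ℝ} {κ c : ℝ} {L : ℕ}
    (hf : WeaklyBiLipschitzOn f (Set.range X) κ L) (hκ : 0 ≤ κ) (hX : ∀ ω, |X ω| ≤ c) :
    ∃ c', ∀ ω, |f (X ω)| ≤ c' := by
  rcases isEmpty_or_nonempty α with _ | ⟨⟨a⟩⟩
  · exact ⟨0, isEmptyElim⟩
  refine ⟨κ * (c + c) + |f (X a)|, fun ω => ?_⟩
  calc |f (X ω)| ≤ |f (X ω) - f (X a)| + |f (X a)| := by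
        simpa using abs_add_le (f (X ω) - f (X a)) (f (X a))
    _ ≤ κ * |X ω - X a| + |f (X a)| := by
        gcongr
        exact hf.1 _ ⟨ω, rfl⟩ _ ⟨a, rfl⟩
    _ ≤ κ * (c + c) + |f (X a)| := by
        gcongr
        exact (abs_sub _ _).trans (add_le_add (hX ω) (hX a))

/-- Lemma (four functions): for any bound `L` on the number of pieces in the weak
bi-Lipschitz decompositions there is `A > 0` such that for all bounded independent `X, Y`,
all independent copies `(X₁,Y₁)`, `(X₂,Y₂)` of `(X,Y)`, all `κ ≥ 2` and all weakly
κ-bi-Lipschitz `f, g`, for all `n`: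
(a) `Hₙ(f(X₁)+f(X₂)+g(Y₁)+g(Y₂)) ≤ 3Hₙ(f(X)+g(Y)) − Hₙ(X) − Hₙ(Y) + A log κ`;
(b) `Hₙ(f(X₁)−f(X₂)+g(Y₁)−g(Y₂)) ≤ 7Hₙ(f(X)+g(Y)) − 3Hₙ(X) − 3Hₙ(Y) + A log κ`;
(c) `Hₙ(f(X₁)+f(X₂)−g(Y₁)−g(Y₂)) ≤ 9Hₙ(f(X)+g(Y)) − 4Hₙ(X) − 4Hₙ(Y) + A log κ`. -/
theorem four_functions_entropy (L : ℕ) :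
    ∃ A : ℝ, 0 < A ∧
      ∀ (Ω : Type) (mΩ : MeasurableSpace Ω) (P : Measure Ω),
        IsProbabilityMeasure P →
        ∀ (X Y X₁ Y₁ X₂ Y₂ : Ω → ℝ), Measurable X → Measurable Y →
          Measurable X₁ → Measurable Y₁ → Measurable X₂ → Measurable Y₂ →
          ∀ c : ℝ, (∀ ω, |X ω| ≤ c ∧ |Y ω| ≤ c) →
            IndepFun X Y P →
            IndepFun (fun ω => (X₁ ω, Y₁ ω)) (fun ω => (X₂ ω, Y₂ ω)) P →
            Measure.map (fun ω => (X₁ ω, Y₁ ω)) P = Measure.map (fun ω => (X ω, Y ω)) P →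
            Measure.map (fun ω => (X₂ ω, Y₂ ω)) P = Measure.map (fun ω => (X ω, Y ω)) P →
            ∀ κ : ℝ, 2 ≤ κ →
              ∀ f g : ℝ → ℝ, Measurable f → Measurable g →
                WeaklyBiLipschitzOn f (Set.range X) κ L →
                WeaklyBiLipschitzOn g (Set.range Y) κ L →
                ∀ n : ℕ,
                  Hn P n (fun ω => f (X₁ ω) + f (X₂ ω) + g (Y₁ ω) + g (Y₂ ω)) ≤
                      3 * Hn P n (fun ω => f (X ω) + g (Y ω)) - Hn P n X - Hn P n Y +
                        A * Real.logb 2 κ ∧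
                  Hn P n (fun ω => f (X₁ ω) - f (X₂ ω) + g (Y₁ ω) - g (Y₂ ω)) ≤
                      7 * Hn P n (fun ω => f (X ω) + g (Y ω)) - 3 * Hn P n X - 3 * Hn P n Y +
                        A * Real.logb 2 κ ∧
                  Hn P n (fun ω => f (X₁ ω) + f (X₂ ω) - g (Y₁ ω) - g (Y₂ ω)) ≤
                      9 * Hn P n (fun ω => f (X ω) + g (Y ω)) - 4 * Hn P n X - 4 * Hn P n Y +
                        A * Real.logb 2 κ := by
  refine ⟨8 * logb 2 L + 45, by linarith [logb_two_natCast_nonneg L], ?_⟩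
  intro Ω mΩ P _ X Y X₁ Y₁ X₂ Y₂ hX hY hX₁ hY₁ hX₂ hY₂ c hc hXY hind hlaw₁ hlaw₂ κ hκ f g hf hg
    hfLip hgLip
  obtain ⟨a, ha⟩ := hfLip.exists_abs_le (by linarith) fun ω => (hc ω).1
  obtain ⟨b, hb⟩ := hgLip.exists_abs_le (by linarith) fun ω => (hc ω).2
  have hcopies : IndepCopies (fun ω => (X₁ ω, Y₁ ω)) (fun ω => (X₂ ω, Y₂ ω))
      (fun ω => (X ω, Y ω)) P P :=
    { measurable_left := hX₁.prodMk hY₁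
      measurable_right := hX₂.prodMk hY₂
      identDistrib_left := ⟨(hX₁.prodMk hY₁).aemeasurable, (hX.prodMk hY).aemeasurable, hlaw₁⟩
      identDistrib_right := ⟨(hX₂.prodMk hY₂).aemeasurable, (hX.prodMk hY).aemeasurable, hlaw₂⟩
      indepFun := hind }
  exact four_functions_entropy_general hX hY hXY hcopies hf hg ⟨a, .of_forall ha⟩
    ⟨b, .of_forall hb⟩ (.of_forall Set.mem_range_self) (.of_forall Set.mem_range_self) hκ
    hfLip.2 hgLip.2
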